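/- Let Q > 0 and let h : S² → S² be Q-Lipschitz with respect to the ambient Euclidean distance on ℝ³. For y ∈ [−1, 1], let μ_y be the pushforward of Lebesgue measure on [0, 1] under θ ↦ π_S(θ, y) = (√(1−y²)cos(2πθ), √(1−y²)sin(2πθ), y). Then for all y, y' ∈ [−1, 1] and every 1-Lipschitz function f : S² → ℝ, ∫ f d(h_*μ_y) − ∫ f d(h_*μ_{y'}) ≤ 2Q·√|y − y'|. In particular the Kantorovich distance satisfies d_K(h_*μ_y, h_*μ_{y'}) ≤ 2Q·√|y − y'|. -/

import Mathlib

open MeasureTheory Metric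
open scoped NNReal

/-- The cylindrical (Archimedes) parametrization of the unit sphere:
`π_S(θ, y) = (√(1−y²)cos(2πθ), √(1−y²)sin(2πθ), y)`. -/
noncomputable def piS (θ y : ℝ) : EuclideanSpace ℝ (Fin 3) :=
  (EuclideanSpace.equiv (Fin 3) ℝ).symm
    ![Real.sqrt (1 - y ^ 2) * Real.cos (2 * Real.pi * θ),
      Real.sqrt (1 - y ^ 2) * Real.sin (2 * Real.pi * θ), y]

/-- The uniform probability measure `μ_y` on the latitude circle of the unit sphere at height
`y`: the pushforward of Lebesgue measure on `[0,1]` under `θ ↦ π_S(θ, y)`, viewed as a measure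
on the sphere. -/
noncomputable def latitudeMeasure (y : ℝ) :
    Measure (sphere (0 : EuclideanSpace ℝ (Fin 3)) 1) :=
  Measure.comap Subtype.val
    (Measure.map (fun θ => piS θ y) (volume.restrict (Set.Icc (0 : ℝ) 1)))

lemma piS_mem_aux (θ y : ℝ) (hy : y ∈ Set.Icc (-1 : ℝ) 1) :
    piS θ y ∈ sphere (0 : EuclideanSpace ℝ (Fin 3)) 1 := by
  have h0 : 0 ≤ 1 - y ^ 2 := by nlinarith [hy.1, hy.2]
  have h1 := Real.sq_sqrt h0
  have h2 := Real.sin_sq_add_cos_sq (2 * Real.pi * θ)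
  rw [mem_sphere_zero_iff_norm, EuclideanSpace.norm_eq, Real.sqrt_eq_one]
  simp only [piS, Fin.sum_univ_three, Real.norm_eq_abs, sq_abs]
  simp
  rw [mul_pow, mul_pow, h1]
  linear_combination (1 - y ^ 2) * h2

lemma piS_dist_aux (θ y y' : ℝ) (hy : y ∈ Set.Icc (-1 : ℝ) 1) (hy' : y' ∈ Set.Icc (-1 : ℝ) 1) :
    dist (piS θ y) (piS θ y') ≤ 2 * Real.sqrt |y - y'| := by
  obtain ⟨a1, a2⟩ := hy
  obtain ⟨b1, b2⟩ := hy'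
  have h0 : 0 ≤ 1 - y ^ 2 := by nlinarith
  have h0' : 0 ≤ 1 - y' ^ 2 := by nlinarith
  have h1 := Real.sq_sqrt h0
  have h1' := Real.sq_sqrt h0'
  have p1 := Real.sqrt_nonneg (1 - y ^ 2)
  have p1' := Real.sqrt_nonneg (1 - y' ^ 2)
  have h2 := Real.sin_sq_add_cos_sq (2 * Real.pi * θ)
  have e : (2 : ℝ) * Real.sqrt |y - y'| = Real.sqrt (4 * |y - y'|) := by
    rw [Real.sqrt_mul (by norm_num), show (4 : ℝ) = 2 ^ 2 by norm_num,
      Real.sqrt_sq (by norm_num)]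
  rw [EuclideanSpace.dist_eq, e]
  apply Real.sqrt_le_sqrt
  simp only [piS, Fin.sum_univ_three, Real.dist_eq, sq_abs]
  simp
  generalize Real.sqrt (1 - y ^ 2) = s at *
  generalize Real.sqrt (1 - y' ^ 2) = t at *
  generalize Real.sin (2 * Real.pi * θ) = u at *
  generalize Real.cos (2 * Real.pi * θ) = v at *
  have e2 : (s * v - t * v) ^ 2 + (s * u - t * u) ^ 2 + (y - y') ^ 2
      = (s - t) ^ 2 + (y - y') ^ 2 := by
    linear_combination (s - t) ^ 2 * h2
  rw [e2]
  have k1 : (s - t) ^ 2 ≤ |s ^ 2 - t ^ 2| := by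
    rcases le_total s t with g | g
    · refine le_trans ?_ (neg_le_abs _)
      nlinarith
    · refine le_trans ?_ (le_abs_self _)
      nlinarith
  have k2 : |s ^ 2 - t ^ 2| ≤ 2 * |y - y'| := by
    rw [h1, h1', show 1 - y ^ 2 - (1 - y' ^ 2) = -(y + y') * (y - y') by ring, abs_mul]
    apply mul_le_mul_of_nonneg_right _ (abs_nonneg _)
    rw [abs_le]; constructor <;> linarith
  have k3 : (y - y') ^ 2 ≤ 2 * |y - y'| := by
    rw [← sq_abs, sq]
    apply mul_le_mul_of_nonneg_right _ (abs_nonneg _)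
    rw [abs_le]; constructor <;> linarith
  linarith

lemma piS_cont_aux (y : ℝ) : Continuous (fun θ => piS θ y) := by
  unfold piS
  refine (EuclideanSpace.equiv (Fin 3) ℝ).symm.continuous.comp ?_
  refine continuous_pi fun i => ?_
  fin_cases i <;> simp <;> fun_prop

lemma latitude_integral_aux (y : ℝ) (hy : y ∈ Set.Icc (-1 : ℝ) 1)
    (g : sphere (0 : EuclideanSpace ℝ (Fin 3)) 1 → ℝ) (hg : Continuous g) :
    ∫ x, g x ∂(latitudeMeasure y)
      = ∫ θ in Set.Icc (0 : ℝ) 1, g ⟨piS θ y, piS_mem_aux θ y hy⟩ := by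
  have hc : Continuous (fun θ => (⟨piS θ y, piS_mem_aux θ y hy⟩ :
      sphere (0 : EuclideanSpace ℝ (Fin 3)) 1)) := (piS_cont_aux y).subtype_mk _
  have e : latitudeMeasure y = Measure.map (fun θ => (⟨piS θ y, piS_mem_aux θ y hy⟩ :
      sphere (0 : EuclideanSpace ℝ (Fin 3)) 1)) (volume.restrict (Set.Icc (0 : ℝ) 1)) := by
    have em : MeasurableEmbedding (Subtype.val :
        sphere (0 : EuclideanSpace ℝ (Fin 3)) 1 → EuclideanSpace ℝ (Fin 3)) :=
      MeasurableEmbedding.subtype_coe isClosed_sphere.measurableSet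
    rw [← em.comap_map (Measure.map _ _), Measure.map_map em.measurable hc.measurable]
    rfl
  rw [e, integral_map hc.measurable.aemeasurable hg.aestronglyMeasurable]

/-- **Hölder continuity of pushed-forward latitude measures.** If `h : S² → S²` is `Q`-Lipschitz
(for the ambient Euclidean distance), then for all `y, y' ∈ [−1,1]` and every 1-Lipschitz
`f : S² → ℝ`, `∫ f d(h_*μ_y) − ∫ f d(h_*μ_{y'}) ≤ 2Q√|y − y'|`; hence
`d_K(h_*μ_y, h_*μ_{y'}) ≤ 2Q√|y − y'|`. -/
theorem lipschitz_pushforward_latitude_holder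
    (Q : ℝ≥0) (hQ : 0 < Q)
    (h : sphere (0 : EuclideanSpace ℝ (Fin 3)) 1 → sphere (0 : EuclideanSpace ℝ (Fin 3)) 1)
    (hh : LipschitzWith Q h)
    (y y' : ℝ) (hy : y ∈ Set.Icc (-1 : ℝ) 1) (hy' : y' ∈ Set.Icc (-1 : ℝ) 1)
    (f : sphere (0 : EuclideanSpace ℝ (Fin 3)) 1 → ℝ) (hf : LipschitzWith 1 f) :
    (∫ x, f x ∂(Measure.map h (latitudeMeasure y))) -
        ∫ x, f x ∂(Measure.map h (latitudeMeasure y')) ≤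
      2 * (Q : ℝ) * Real.sqrt |y - y'| := by
  have hg : Continuous (fun x => f (h x)) := hf.continuous.comp hh.continuous
  rw [integral_map hh.continuous.measurable.aemeasurable hf.continuous.aestronglyMeasurable,
    integral_map hh.continuous.measurable.aemeasurable hf.continuous.aestronglyMeasurable,
    latitude_integral_aux y hy _ hg, latitude_integral_aux y' hy' _ hg]
  have i1 : IntegrableOn (fun θ => f (h ⟨piS θ y, piS_mem_aux θ y hy⟩)) (Set.Icc (0 : ℝ) 1) :=
    (hg.comp ((piS_cont_aux y).subtype_mk _)).integrableOn_Icc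
  have i2 : IntegrableOn (fun θ => f (h ⟨piS θ y', piS_mem_aux θ y' hy'⟩)) (Set.Icc (0 : ℝ) 1) :=
    (hg.comp ((piS_cont_aux y').subtype_mk _)).integrableOn_Icc
  rw [← integral_sub i1 i2]
  have key : ∀ θ : ℝ, f (h ⟨piS θ y, piS_mem_aux θ y hy⟩)
      - f (h ⟨piS θ y', piS_mem_aux θ y' hy'⟩) ≤ 2 * (Q : ℝ) * Real.sqrt |y - y'| := by
    intro θ
    have d1 := (hf.comp hh).dist_le_mul ⟨piS θ y, piS_mem_aux θ y hy⟩
      ⟨piS θ y', piS_mem_aux θ y' hy'⟩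
    rw [Subtype.dist_eq, Real.dist_eq, one_mul] at d1
    have d2 := mul_le_mul_of_nonneg_left (piS_dist_aux θ y y' hy hy') Q.coe_nonneg
    have d3 := (le_abs_self _).trans d1
    simp only [Function.comp] at d3
    linarith
  calc _ ≤ ∫ θ in Set.Icc (0 : ℝ) 1, 2 * (Q : ℝ) * Real.sqrt |y - y'| :=
        integral_mono (i1.sub i2) (integrable_const _) key
    _ = _ := by simp
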